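/- Let $c$ and $\mu$ be fixed real numbers with $1 < c < \frac{17}{16}$ and $0 < \mu < 1$. There exists a constant $C = C(c, \mu) > 0$ such that for every real $X \geq 3$ and every real $\Delta$ with $0 < \Delta \leq X^{1-c}$, one has $\int_{-\Delta}^{\Delta} |I(\alpha)|^2 \, d\alpha \leq C X^{2-c} (\log X)^6$. -/

import Mathlib

/-- `e(t) = e^{2πit}`. -/
noncomputable def e (t : ℝ) : ℂ := Complex.exp (2 * Real.pi * Complex.I * t)

/-- `I(α) = ∫_{μX}^{X} e(α t^c) dt`. -/
noncomputable def I (c μ X : ℝ) (α : ℝ) : ℂ := ∫ t in (μ * X)..X, e (α * t ^ c)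

/-!
The substitution `t = X s` gives `I c μ X α = X * I c μ 1 (X ^ c * α)`, so that the mean square of
`I c μ X` over the whole line is exactly `X ^ (2 - c)` times that of `I c μ 1`. The latter is
finite, because `I c μ 1` is bounded and, by integration by parts against the reciprocal of the
derivative of the phase, `O(1 / |α|)`. As `log X ≥ 1` for `X ≥ 3`, this is more than enough.
-/

open MeasureTheory Set

theorem e_eq_fourierChar (t : ℝ) : e t = Real.fourierChar t := by
  rw [e, Real.fourierChar_apply]
  push_cast
  ring_nf

theorem norm_e (t : ℝ) : ‖e t‖ = 1 := by
  rw [e_eq_fourierChar, Circle.norm_coe]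

theorem hasDerivAt_e (t : ℝ) : HasDerivAt e (2 * Real.pi * Complex.I * e t) t := by
  simpa only [← e_eq_fourierChar] using Real.hasDerivAt_fourierChar t

theorem continuous_e : Continuous e :=
  continuous_iff_continuousAt.2 fun t => (hasDerivAt_e t).continuousAt

section OscillatoryIntegral

variable {a b : ℝ} {φ φ' : ℝ → ℝ} {w w' : ℝ → ℂ}

theorem norm_integral_e_mul_le (a b : ℝ) (φ : ℝ → ℝ) (α : ℝ) :
    ‖∫ t in a..b, e (α * φ t)‖ ≤ |b - a| := by
  simpa only [one_mul] using
    intervalIntegral.norm_integral_le_of_norm_le_const fun t _ => (norm_e (α * φ t)).le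

theorem continuous_integral_e_mul (hφ : Measurable φ) :
    Continuous fun α => ∫ t in a..b, e (α * φ t) := by
  refine intervalIntegral.continuous_of_dominated_interval (bound := fun _ => 1)
    (fun α => ?_) (fun α => ?_) intervalIntegrable_const ?_
  · exact (continuous_e.measurable.comp (hφ.const_mul α)).aestronglyMeasurable
  · exact .of_forall fun t _ => (norm_e _).le
  · exact .of_forall fun t _ => continuous_e.comp (continuous_mul_const (φ t))

theorem mul_integral_mul_deriv_mul_e_eq (α : ℝ)
    (hφ : ∀ t ∈ uIcc a b, HasDerivAt φ (φ' t) t) (hφ' : IntervalIntegrable φ' volume a b)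
    (hw : ∀ t ∈ uIcc a b, HasDerivAt w (w' t) t) (hw' : IntervalIntegrable w' volume a b) :
    2 * Real.pi * Complex.I * α * ∫ t in a..b, w t * φ' t * e (α * φ t) =
      w b * e (α * φ b) - w a * e (α * φ a) - ∫ t in a..b, w' t * e (α * φ t) := by
  have he (t : ℝ) (ht : t ∈ uIcc a b) : HasDerivAt (fun t => e (α * φ t))
      (φ' t * (2 * Real.pi * Complex.I * α * e (α * φ t))) t := by
    refine ((hasDerivAt_e (α * φ t)).scomp t ((hφ t ht).const_mul α)).congr_deriv ?_
    rw [Complex.real_smul]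
    push_cast
    ring
  have he_cont : ContinuousOn (fun t => e (α * φ t)) (uIcc a b) := fun t ht =>
    (he t ht).continuousAt.continuousWithinAt
  have he' : IntervalIntegrable
      (fun t => φ' t * (2 * Real.pi * Complex.I * α * e (α * φ t))) volume a b :=
    IntervalIntegrable.mul_continuousOn ⟨hφ'.1.ofReal, hφ'.2.ofReal⟩
      (continuousOn_const.mul he_cont)
  rw [← intervalIntegral.integral_mul_deriv_eq_deriv_mul hw he hw' he',
    ← intervalIntegral.integral_const_mul]
  congr with t
  ring

theorem abs_mul_norm_integral_mul_deriv_mul_e_le (α : ℝ)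
    (hφ : ∀ t ∈ uIcc a b, HasDerivAt φ (φ' t) t) (hφ' : IntervalIntegrable φ' volume a b)
    (hw : ∀ t ∈ uIcc a b, HasDerivAt w (w' t) t) (hw' : IntervalIntegrable w' volume a b) :
    2 * Real.pi * |α| * ‖∫ t in a..b, w t * φ' t * e (α * φ t)‖ ≤
      ‖w b‖ + ‖w a‖ + |∫ t in a..b, ‖w' t‖| := by
  have hconst : ‖2 * Real.pi * Complex.I * (α : ℂ)‖ = 2 * Real.pi * |α| := by
    simp [abs_of_pos Real.pi_pos]
  have hrest : ‖∫ t in a..b, w' t * e (α * φ t)‖ ≤ |∫ t in a..b, ‖w' t‖| := by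
    simpa only [norm_mul, norm_e, mul_one] using
      intervalIntegral.norm_integral_le_abs_integral_norm (f := fun t => w' t * e (α * φ t))
  rw [← hconst, ← norm_mul, mul_integral_mul_deriv_mul_e_eq α hφ hφ' hw hw']
  calc _ ≤ ‖w b * e (α * φ b)‖ + ‖w a * e (α * φ a)‖ + ‖∫ t in a..b, w' t * e (α * φ t)‖ :=
        (norm_sub_le _ _).trans (add_le_add_left (norm_sub_le _ _) _)
    _ ≤ ‖w b‖ + ‖w a‖ + |∫ t in a..b, ‖w' t‖| := by
        simpa only [norm_mul, norm_e, mul_one, add_le_add_iff_left] using hrest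

theorem abs_mul_norm_integral_e_mul_le_of_mul_deriv_eq_one {w w' : ℝ → ℝ} (α : ℝ)
    (hφ : ∀ t ∈ uIcc a b, HasDerivAt φ (φ' t) t) (hφ' : IntervalIntegrable φ' volume a b)
    (hw : ∀ t ∈ uIcc a b, HasDerivAt w (w' t) t) (hw' : IntervalIntegrable w' volume a b)
    (hwφ' : ∀ t ∈ uIcc a b, w t * φ' t = 1) :
    |α| * ‖∫ t in a..b, e (α * φ t)‖ ≤
      (‖w b‖ + ‖w a‖ + |∫ t in a..b, ‖w' t‖|) / (2 * Real.pi) := by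
  have hweight (t : ℝ) (ht : t ∈ uIcc a b) :
      (w t : ℂ) * φ' t * e (α * φ t) = e (α * φ t) := by
    rw [← Complex.ofReal_mul, hwφ' t ht, Complex.ofReal_one, one_mul]
  rw [le_div_iff₀' Real.two_pi_pos, ← mul_assoc, ← intervalIntegral.integral_congr hweight]
  simpa only [Complex.norm_real] using
    abs_mul_norm_integral_mul_deriv_mul_e_le α hφ hφ' (fun t ht => (hw t ht).ofReal_comp)
      ⟨hw'.1.ofReal, hw'.2.ofReal⟩

theorem exists_abs_mul_norm_integral_e_mul_rpow_le {c : ℝ} (hc : c ≠ 0) (ha : 0 < a) (hb : 0 < b) :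
    ∃ K, ∀ α : ℝ, |α| * ‖∫ t in a..b, e (α * t ^ c)‖ ≤ K := by
  have hpos (t : ℝ) (ht : t ∈ uIcc a b) : 0 < t := (lt_min ha hb).trans_le ht.1
  have hderiv (p t : ℝ) (ht : t ∈ uIcc a b) : HasDerivAt (· ^ p) (p * t ^ (p - 1)) t :=
    Real.hasDerivAt_rpow_const (.inl (hpos t ht).ne')
  have hint (p : ℝ) : IntervalIntegrable (fun t => p * t ^ (p - 1)) volume a b :=
    (intervalIntegral.intervalIntegrable_rpow (.inr fun h => (hpos 0 h).false)).const_mul p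
  have hweight (t : ℝ) (ht : t ∈ uIcc a b) : t ^ (1 - c) / c * (c * t ^ (c - 1)) = 1 := by
    rw [← mul_assoc, div_mul_cancel₀ _ hc, ← Real.rpow_add (hpos t ht), sub_add_sub_cancel',
      sub_self, Real.rpow_zero]
  exact ⟨_, fun α => abs_mul_norm_integral_e_mul_le_of_mul_deriv_eq_one α (hderiv c) (hint c)
    (fun t ht => (hderiv (1 - c) t ht).div_const c) ((hint (1 - c)).div_const c) hweight⟩

end OscillatoryIntegral

theorem integrable_norm_sq_of_norm_le_of_abs_mul_norm_le {E : Type*} [NormedAddCommGroup E]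
    {f : ℝ → E} {A B : ℝ} (hf : AEStronglyMeasurable f) (hA : ∀ x, ‖f x‖ ≤ A)
    (hB : ∀ x, |x| * ‖f x‖ ≤ B) : Integrable fun x => ‖f x‖ ^ 2 := by
  refine (integrable_inv_one_add_sq.const_mul (A ^ 2 + B ^ 2)).mono' (hf.norm.pow 2)
    (.of_forall fun x => ?_)
  have hA_sq : ‖f x‖ ^ 2 ≤ A ^ 2 := pow_le_pow_left₀ (norm_nonneg _) (hA x) 2
  have hB_sq : x ^ 2 * ‖f x‖ ^ 2 ≤ B ^ 2 := by
    simpa only [mul_pow, sq_abs] using pow_le_pow_left₀ (by positivity) (hB x) 2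
  rw [norm_pow, norm_norm, ← div_eq_mul_inv, le_div_iff₀ (by positivity)]
  linarith

theorem intervalIntegral_le_integral {f : ℝ → ℝ} {a b : ℝ} (hab : a ≤ b) (hf : Integrable f)
    (hf_nonneg : 0 ≤ f) : ∫ x in a..b, f x ≤ ∫ x, f x := by
  rw [intervalIntegral.integral_of_le hab]
  exact setIntegral_le_integral hf (.of_forall hf_nonneg)

theorem one_le_log_of_three_le {x : ℝ} (hx : 3 ≤ x) : 1 ≤ Real.log x :=
  (Real.le_log_iff_exp_le (by linarith)).2 (by linarith [Real.exp_one_lt_d9])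

section PowerPhase

variable {c μ X : ℝ}

theorem integrable_norm_I_sq (hc : c ≠ 0) (hμ : 0 < μ) (hX : 0 < X) :
    Integrable fun α => ‖I c μ X α‖ ^ 2 := by
  obtain ⟨K, hK⟩ := exists_abs_mul_norm_integral_e_mul_rpow_le hc (mul_pos hμ hX) hX
  have hcont : Continuous (I c μ X) := continuous_integral_e_mul (measurable_id.pow_const c)
  exact integrable_norm_sq_of_norm_le_of_abs_mul_norm_le hcont.aestronglyMeasurable
    (norm_integral_e_mul_le _ _ _) hK

theorem I_eq_mul_I_one (hμ : 0 ≤ μ) (hX : 0 ≤ X) (α : ℝ) :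
    I c μ X α = X * I c μ 1 (X ^ c * α) := by
  have hphase (s : ℝ) (hs : s ∈ uIcc μ 1) : e (α * (X * s) ^ c) = e (X ^ c * α * s ^ c) := by
    have hs_nonneg : 0 ≤ s := (le_min hμ zero_le_one).trans hs.1
    rw [Real.mul_rpow hX hs_nonneg, ← mul_assoc, mul_comm α]
  calc I c μ X α = X * ∫ s in μ..1, e (α * (X * s) ^ c) := by
        rw [← Complex.real_smul,
          intervalIntegral.smul_integral_comp_mul_left (fun t => e (α * t ^ c)),
          mul_one, mul_comm X, I]
    _ = X * I c μ 1 (X ^ c * α) := by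
        rw [intervalIntegral.integral_congr hphase, I, mul_one]

theorem integral_norm_I_sq_eq (hμ : 0 ≤ μ) (hX : 0 < X) :
    ∫ α, ‖I c μ X α‖ ^ 2 = X ^ (2 - c) * ∫ α, ‖I c μ 1 α‖ ^ 2 := by
  simp only [I_eq_mul_I_one (X := X) hμ hX.le, norm_mul, Complex.norm_of_nonneg hX.le, mul_pow]
  rw [integral_const_mul, Measure.integral_comp_mul_left (fun α => ‖I c μ 1 α‖ ^ 2),
    abs_of_pos (by positivity), smul_eq_mul, ← mul_assoc, ← div_eq_mul_inv, Real.rpow_sub hX,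
    Real.rpow_two]

end PowerPhase

theorem stmt_6_general {c μ : ℝ} (hc : c ≠ 0) (hμ : 0 < μ) :
    ∃ C : ℝ, 0 < C ∧ ∀ X : ℝ, 0 < X →
      Integrable (fun α => ‖I c μ X α‖ ^ 2) ∧ ∫ α, ‖I c μ X α‖ ^ 2 ≤ C * X ^ (2 - c) := by
  refine ⟨(∫ α, ‖I c μ 1 α‖ ^ 2) + 1, by positivity, fun X hX => ?_⟩
  refine ⟨integrable_norm_I_sq hc hμ hX, ?_⟩
  rw [integral_norm_I_sq_eq hμ.le hX, mul_comm]
  gcongr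
  exact le_add_of_nonneg_right zero_le_one

theorem stmt_6 (c μ : ℝ) (hc1 : 1 < c) (hc2 : c < 17 / 16) (hμ1 : 0 < μ) (hμ2 : μ < 1) :
    ∃ C : ℝ, 0 < C ∧
      ∀ X : ℝ, 3 ≤ X → ∀ Δ : ℝ, 0 < Δ → Δ ≤ X ^ (1 - c) →
        (∫ α in (-Δ)..Δ, ‖I c μ X α‖ ^ 2) ≤ C * X ^ (2 - c) * Real.log X ^ 6 := by
  obtain ⟨C, hC, hI⟩ := stmt_6_general (c := c) (by linarith) hμ1
  refine ⟨C, hC, fun X hX Δ hΔ _ => ?_⟩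
  obtain ⟨hint, hle⟩ := hI X (by linarith)
  calc ∫ α in (-Δ)..Δ, ‖I c μ X α‖ ^ 2 ≤ ∫ α, ‖I c μ X α‖ ^ 2 :=
        intervalIntegral_le_integral (by linarith) hint fun α => by positivity
    _ ≤ C * X ^ (2 - c) := hle
    _ ≤ C * X ^ (2 - c) * Real.log X ^ 6 :=
        le_mul_of_one_le_right (by positivity) (one_le_pow₀ (one_le_log_of_three_le hX))
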